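/- arXiv:1302.5535 — 2 statements merged into one kernel-verified Lean document; each statement's English description precedes it below -/
import Mathlib

section
/- Let A ∈ ℝ^{n×n} be nonsingular, 1 ≤ k ≤ d(A) − 1, and let b ∈ ℝ^n be a unit norm k-th worst-case GMRES initial vector with k-th GMRES polynomial p_k and residual r_k = p_k(A)b. If q_k ∈ π_k is the k-th GMRES polynomial of Aᵀ and the initial vector r_k/‖r_k‖, then q_k(Aᵀ) p_k(A) b = Ψ_k(A)² b, i.e., b is an eigenvector of q_k(Aᵀ)p_k(A) with eigenvalue Ψ_k(A)². -/
open Polynomial Matrix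

/-- The Euclidean norm of a real vector. -/
noncomputable def euclNorm {ι : Type*} [Fintype ι] (v : ι → ℝ) : ℝ :=
  Real.sqrt (∑ i, v i ^ 2)

/-- The Euclidean norm of a complex vector. -/
noncomputable def euclNormC {ι : Type*} [Fintype ι] (v : ι → ℂ) : ℝ :=
  Real.sqrt (∑ i, ‖v i‖ ^ 2)

/-- The Euclidean inner product of two real vectors. -/
noncomputable def edot {ι : Type*} [Fintype ι] (u v : ι → ℝ) : ℝ := ∑ i, u i * v i

/-- `p ∈ π_k`: real polynomials of degree at most `k` with value `1` at the origin. -/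
def IsPik (k : ℕ) (p : Polynomial ℝ) : Prop := p.natDegree ≤ k ∧ p.eval 0 = 1

/-- `p ∈ π_{k,ℂ}`: complex polynomials of degree at most `k` with value `1` at the origin. -/
def IsPikC (k : ℕ) (p : Polynomial ℂ) : Prop := p.natDegree ≤ k ∧ p.eval 0 = 1

/-- The `k`-th GMRES residual norm `min_{p ∈ π_k} ‖p(A)v‖`. -/
noncomputable def gmresVal {ι : Type*} [Fintype ι] [DecidableEq ι]
    (A : Matrix ι ι ℝ) (k : ℕ) (v : ι → ℝ) : ℝ :=
  sInf {s : ℝ | ∃ p : Polynomial ℝ, IsPik k p ∧ s = euclNorm ((Polynomial.aeval A p).mulVec v)}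

/-- The `k`-th worst-case GMRES approximation `Ψ_k(A) = max_{‖v‖=1} min_{p ∈ π_k} ‖p(A)v‖`. -/
noncomputable def Psi {ι : Type*} [Fintype ι] [DecidableEq ι]
    (A : Matrix ι ι ℝ) (k : ℕ) : ℝ :=
  sSup {r : ℝ | ∃ v : ι → ℝ, euclNorm v = 1 ∧ r = gmresVal A k v}

/-- `d(A)`: the degree of the minimal polynomial of `A`. -/
noncomputable def dA {ι : Type*} [Fintype ι] [DecidableEq ι] (A : Matrix ι ι ℝ) : ℕ :=
  (minpoly ℝ A).natDegree

/-- `d(A,b)`: the smallest degree of a nonzero polynomial `q` with `q(A)b = 0`. -/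
noncomputable def dAb {ι : Type*} [Fintype ι] [DecidableEq ι]
    (A : Matrix ι ι ℝ) (b : ι → ℝ) : ℕ :=
  sInf {d : ℕ | ∃ q : Polynomial ℝ, q ≠ 0 ∧ q.natDegree = d ∧ (Polynomial.aeval A q).mulVec b = 0}

/-- `r = GMRES(A,b,k)`: `r = p(A)b` for some `p ∈ π_k` minimizing `‖p(A)b‖` over `π_k`. -/
def IsGmresRes {ι : Type*} [Fintype ι] [DecidableEq ι]
    (A : Matrix ι ι ℝ) (k : ℕ) (b r : ι → ℝ) : Prop :=
  ∃ p : Polynomial ℝ, IsPik k p ∧ r = (Polynomial.aeval A p).mulVec b ∧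
    ∀ q : Polynomial ℝ, IsPik k q → euclNorm r ≤ euclNorm ((Polynomial.aeval A q).mulVec b)

/-- `p` is the `k`-th GMRES polynomial of `A` and `b`: `p ∈ π_k` minimizes `‖p(A)b‖`. -/
def IsGmresPoly {ι : Type*} [Fintype ι] [DecidableEq ι]
    (A : Matrix ι ι ℝ) (k : ℕ) (b : ι → ℝ) (p : Polynomial ℝ) : Prop :=
  IsPik k p ∧ ∀ q : Polynomial ℝ, IsPik k q →
    euclNorm ((Polynomial.aeval A p).mulVec b) ≤ euclNorm ((Polynomial.aeval A q).mulVec b)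

/-- The Krylov subspace `K_k(A,b) = span{b, Ab, …, A^{k-1}b}`. -/
noncomputable def krylov {ι : Type*} [Fintype ι] [DecidableEq ι]
    (A : Matrix ι ι ℝ) (k : ℕ) (b : ι → ℝ) : Submodule ℝ (ι → ℝ) :=
  Submodule.span ℝ (Set.range fun i : Fin k => (A ^ (i : ℕ)).mulVec b)

/-- `b` satisfies the cross equality for `A` and step `k`. -/
def CrossEq {ι : Type*} [Fintype ι] [DecidableEq ι]
    (A : Matrix ι ι ℝ) (k : ℕ) (b : ι → ℝ) : Prop :=
  ∀ r s : ι → ℝ, IsGmresRes A k b r → IsGmresRes Aᵀ k ((euclNorm r)⁻¹ • r) s →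
    b = (euclNorm s)⁻¹ • s

/-- The Krylov matrix `K(v) = [Av, A²v, …, A^k v]`. -/
noncomputable def Kmat {n : ℕ} (A : Matrix (Fin n) (Fin n) ℝ) (k : ℕ) (v : Fin n → ℝ) :
    Matrix (Fin n) (Fin k) ℝ :=
  Matrix.of fun i j => (A ^ ((j : ℕ) + 1)).mulVec v i

/-- `γ(v) = (K(v)ᵀK(v))⁻¹ K(v)ᵀ v`. -/
noncomputable def gammaVec {n : ℕ} (A : Matrix (Fin n) (Fin n) ℝ) (k : ℕ) (v : Fin n → ℝ) :
    Fin k → ℝ :=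
  ((Kmat A k v)ᵀ * Kmat A k v)⁻¹ *ᵥ ((Kmat A k v)ᵀ *ᵥ v)

/-- `g(v) = min_{c ∈ ℝ^k} ‖v - K(v)c‖²`. -/
noncomputable def gFun {n : ℕ} (A : Matrix (Fin n) (Fin n) ℝ) (k : ℕ) (v : Fin n → ℝ) : ℝ :=
  sInf {s : ℝ | ∃ c : Fin k → ℝ, s = euclNorm (v - Kmat A k v *ᵥ c) ^ 2}

/-- `p(z; c) = 1 - ∑_{j=1}^k c_j z^j`. -/
noncomputable def pPoly {k : ℕ} (c : Fin k → ℝ) : Polynomial ℝ :=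
  1 - ∑ j : Fin k, Polynomial.C (c j) * Polynomial.X ^ ((j : ℕ) + 1)

/-- `f(c,v) = ‖p(A;c)v‖²`. -/
noncomputable def fFun {n k : ℕ} (A : Matrix (Fin n) (Fin n) ℝ) (c : Fin k → ℝ)
    (v : Fin n → ℝ) : ℝ :=
  euclNorm ((Polynomial.aeval A (pPoly c)).mulVec v) ^ 2

/-- `F(c,v) = f(c,v)/(vᵀv)`. -/
noncomputable def FFun {n k : ℕ} (A : Matrix (Fin n) (Fin n) ℝ) (c : Fin k → ℝ)
    (v : Fin n → ℝ) : ℝ :=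
  fFun A c v / edot v v

/-- The Toh matrix `A(ω, ε)`. -/
noncomputable def tohMatrix (ω ε : ℝ) : Matrix (Fin 4) (Fin 4) ℝ :=
  !![1, ε, 0, 0; 0, -1, ω / ε, 0; 0, 0, 1, ε; 0, 0, 0, -1]

/-- `p` is a `k`-th worst-case GMRES polynomial of `A`. -/
def IsWCPoly {ι : Type*} [Fintype ι] [DecidableEq ι]
    (A : Matrix ι ι ℝ) (k : ℕ) (p : Polynomial ℝ) : Prop :=
  IsPik k p ∧ ∃ b : ι → ℝ, euclNorm b = 1 ∧
    (∀ q : Polynomial ℝ, IsPik k q →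
      euclNorm ((Polynomial.aeval A p).mulVec b) ≤ euclNorm ((Polynomial.aeval A q).mulVec b)) ∧
    euclNorm ((Polynomial.aeval A p).mulVec b) = Psi A k

/-- The spectral (Euclidean operator) norm of a real matrix. -/
noncomputable def specNorm {ι : Type*} [Fintype ι] (M : Matrix ι ι ℝ) : ℝ :=
  sSup {r : ℝ | ∃ v : ι → ℝ, euclNorm v = 1 ∧ r = euclNorm (M *ᵥ v)}

/-- The `k`-th ideal GMRES approximation `φ_k(A) = min_{p ∈ π_k} ‖p(A)‖`. -/
noncomputable def phiIdeal {ι : Type*} [Fintype ι] [DecidableEq ι]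
    (A : Matrix ι ι ℝ) (k : ℕ) : ℝ :=
  sInf {r : ℝ | ∃ p : Polynomial ℝ, IsPik k p ∧ r = specNorm (Polynomial.aeval A p)}

/-- Complexification of a real matrix. -/
noncomputable def matC {ι : Type*} (A : Matrix ι ι ℝ) : Matrix ι ι ℂ :=
  A.map fun x => (x : ℂ)

/-- Complexification of a real vector. -/
noncomputable def vecC {ι : Type*} (b : ι → ℝ) : ι → ℂ := fun i => (b i : ℂ)

/-- `Ψ_{k,ℂ,ℝ}(A)`: complex polynomials, real initial vectors. -/
noncomputable def PsiCR {ι : Type*} [Fintype ι] [DecidableEq ι]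
    (A : Matrix ι ι ℝ) (k : ℕ) : ℝ :=
  sSup {r : ℝ | ∃ b : ι → ℝ, euclNorm b = 1 ∧
    r = sInf {s : ℝ | ∃ p : Polynomial ℂ, IsPikC k p ∧
      s = euclNormC ((Polynomial.aeval (matC A) p).mulVec (vecC b))}}

/-- `Ψ_{k,ℂ,ℂ}(A)`: complex polynomials, complex initial vectors. -/
noncomputable def PsiCC {ι : Type*} [Fintype ι] [DecidableEq ι]
    (A : Matrix ι ι ℝ) (k : ℕ) : ℝ :=
  sSup {r : ℝ | ∃ b : ι → ℂ, euclNormC b = 1 ∧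
    r = sInf {s : ℝ | ∃ p : Polynomial ℂ, IsPikC k p ∧
      s = euclNormC ((Polynomial.aeval (matC A) p).mulVec b)}}

/-- `Ψ_{k,ℝ,ℂ}(A)`: real polynomials, complex initial vectors. -/
noncomputable def PsiRC {ι : Type*} [Fintype ι] [DecidableEq ι]
    (A : Matrix ι ι ℝ) (k : ℕ) : ℝ :=
  sSup {r : ℝ | ∃ b : ι → ℂ, euclNormC b = 1 ∧
    r = sInf {s : ℝ | ∃ p : Polynomial ℝ, IsPik k p ∧
      s = euclNormC ((Polynomial.aeval (matC A) (p.map (algebraMap ℝ ℂ))).mulVec b)}}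

/-- `φ_{k,ℝ,ℝ}(A)`. -/
noncomputable def phiRR {ι : Type*} [Fintype ι] [DecidableEq ι]
    (A : Matrix ι ι ℝ) (k : ℕ) : ℝ :=
  sInf {r : ℝ | ∃ p : Polynomial ℝ, IsPik k p ∧
    r = sSup {s : ℝ | ∃ b : ι → ℝ, euclNorm b = 1 ∧
      s = euclNorm ((Polynomial.aeval A p).mulVec b)}}

/-- `φ_{k,ℂ,ℝ}(A)`. -/
noncomputable def phiCR {ι : Type*} [Fintype ι] [DecidableEq ι]
    (A : Matrix ι ι ℝ) (k : ℕ) : ℝ :=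
  sInf {r : ℝ | ∃ p : Polynomial ℂ, IsPikC k p ∧
    r = sSup {s : ℝ | ∃ b : ι → ℝ, euclNorm b = 1 ∧
      s = euclNormC ((Polynomial.aeval (matC A) p).mulVec (vecC b))}}

/-- `φ_{k,ℝ,ℂ}(A)`. -/
noncomputable def phiRC {ι : Type*} [Fintype ι] [DecidableEq ι]
    (A : Matrix ι ι ℝ) (k : ℕ) : ℝ :=
  sInf {r : ℝ | ∃ p : Polynomial ℝ, IsPik k p ∧
    r = sSup {s : ℝ | ∃ b : ι → ℂ, euclNormC b = 1 ∧
      s = euclNormC ((Polynomial.aeval (matC A) (p.map (algebraMap ℝ ℂ))).mulVec b)}}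

/-- `φ_{k,ℂ,ℂ}(A)`. -/
noncomputable def phiCC {ι : Type*} [Fintype ι] [DecidableEq ι]
    (A : Matrix ι ι ℝ) (k : ℕ) : ℝ :=
  sInf {r : ℝ | ∃ p : Polynomial ℂ, IsPikC k p ∧
    r = sSup {s : ℝ | ∃ b : ι → ℂ, euclNormC b = 1 ∧
      s = euclNormC ((Polynomial.aeval (matC A) p).mulVec b)}}

theorem hp_sq {n : ℕ} (v : Fin n → ℝ) : euclNorm v ^ 2 = v ⬝ᵥ v := by
  unfold euclNorm
  rw [Real.sq_sqrt (Finset.sum_nonneg fun i _ => sq_nonneg _)]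
  simp [dotProduct, sq]

theorem hp_nonneg {n : ℕ} (v : Fin n → ℝ) : 0 ≤ euclNorm v := Real.sqrt_nonneg _

theorem hp_smul {n : ℕ} (c : ℝ) (v : Fin n → ℝ) : euclNorm (c • v) = |c| * euclNorm v := by
  rw [← sq_eq_sq₀ (hp_nonneg _) (mul_nonneg (abs_nonneg _) (hp_nonneg _)), mul_pow, hp_sq, hp_sq,
    sq_abs]
  simp only [smul_dotProduct, dotProduct_smul, smul_eq_mul]
  ring

theorem hp_cs {n : ℕ} (u v : Fin n → ℝ) : u ⬝ᵥ v ≤ euclNorm u * euclNorm v := by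
  unfold euclNorm
  exact Real.sum_mul_le_sqrt_mul_sqrt _ _ _

theorem hp_transpose {n : ℕ} (A : Matrix (Fin n) (Fin n) ℝ) (p : Polynomial ℝ) :
    Polynomial.aeval Aᵀ p = (Polynomial.aeval A p)ᵀ := by
  induction p using Polynomial.induction_on' with
  | add p q hp hq => simp [hp, hq]
  | monomial m a =>
    simp [Polynomial.aeval_monomial, Matrix.algebraMap_eq_diagonal, Matrix.transpose_pow,
      ← Matrix.smul_eq_diagonal_mul, Pi.algebraMap_def]

theorem hp_adj {n : ℕ} (A : Matrix (Fin n) (Fin n) ℝ) (p : Polynomial ℝ) (x y : Fin n → ℝ) :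
    (Polynomial.aeval A p).mulVec x ⬝ᵥ y = x ⬝ᵥ (Polynomial.aeval Aᵀ p).mulVec y := by
  rw [hp_transpose, Matrix.dotProduct_mulVec, Matrix.vecMul_transpose]

/-- Orthogonality property of the GMRES residual. -/
theorem hp_orth {n : ℕ} (A : Matrix (Fin n) (Fin n) ℝ) (k : ℕ) (b : Fin n → ℝ)
    (p q : Polynomial ℝ) (hp : IsGmresPoly A k b p) (hq : IsPik k q) :
    (Polynomial.aeval A q).mulVec b ⬝ᵥ (Polynomial.aeval A p).mulVec b
      = euclNorm ((Polynomial.aeval A p).mulVec b) ^ 2 := by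
  obtain ⟨hp1, hmin⟩ := hp
  have key : ∀ t : ℝ, 0 ≤ t * (2 * ((Polynomial.aeval A q).mulVec b ⬝ᵥ
        (Polynomial.aeval A p).mulVec b - euclNorm ((Polynomial.aeval A p).mulVec b) ^ 2))
      + t ^ 2 * euclNorm ((Polynomial.aeval A (q - p)).mulVec b) ^ 2 := by
    intro t
    have hpik : IsPik k (p + Polynomial.C t * (q - p)) := by
      refine ⟨?_, by simp [hp1.2, hq.2]⟩
      refine (Polynomial.natDegree_add_le _ _).trans (max_le hp1.1 ?_)
      refine (Polynomial.natDegree_C_mul_le _ _).trans ?_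
      exact (Polynomial.natDegree_sub_le _ _).trans (max_le hq.1 hp1.1)
    have h := hmin _ hpik
    have h2 := pow_le_pow_left₀ (hp_nonneg _) h 2
    have e : (Polynomial.aeval A (p + Polynomial.C t * (q - p))).mulVec b
        = (Polynomial.aeval A p).mulVec b
          + t • ((Polynomial.aeval A q).mulVec b - (Polynomial.aeval A p).mulVec b) := by
      rw [← Polynomial.smul_eq_C_mul]
      simp [Matrix.add_mulVec, Matrix.smul_mulVec, Matrix.sub_mulVec]
    have e2 : (Polynomial.aeval A (q - p)).mulVec b
        = (Polynomial.aeval A q).mulVec b - (Polynomial.aeval A p).mulVec b := by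
      simp [Matrix.sub_mulVec]
    rw [e] at h2
    rw [e2]
    generalize (Polynomial.aeval A p).mulVec b = x at *
    generalize (Polynomial.aeval A q).mulVec b = y at *
    simp only [hp_sq, add_dotProduct, dotProduct_add, smul_dotProduct, dotProduct_smul,
      sub_dotProduct, dotProduct_sub, smul_eq_mul] at h2 ⊢
    rw [dotProduct_comm x y] at *
    linarith
  generalize (Polynomial.aeval A q).mulVec b ⬝ᵥ (Polynomial.aeval A p).mulVec b = c at *
  generalize euclNorm ((Polynomial.aeval A p).mulVec b) ^ 2 = d at *
  generalize euclNorm ((Polynomial.aeval A (q - p)).mulVec b) ^ 2 = m at *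
  by_contra hne
  have hpos : 0 < (c - d) ^ 2 := by
    have : c - d ≠ 0 := sub_ne_zero.mpr hne
    positivity
  have hm1 : (0 : ℝ) < |m| + 1 := by positivity
  have h := key (-(c - d) / (|m| + 1))
  have e : -(c - d) / (|m| + 1) * (2 * (c - d)) + (-(c - d) / (|m| + 1)) ^ 2 * m
      = (c - d) ^ 2 * (m - 2 * (|m| + 1)) / (|m| + 1) ^ 2 := by
    field_simp
    ring
  rw [e] at h
  have : (c - d) ^ 2 * (m - 2 * (|m| + 1)) / (|m| + 1) ^ 2 < 0 := by
    apply div_neg_of_neg_of_pos _ (by positivity)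
    apply mul_neg_of_pos_of_neg hpos
    have := le_abs_self m
    have := abs_nonneg m
    linarith
  linarith

theorem hp_le_Psi {n : ℕ} (A : Matrix (Fin n) (Fin n) ℝ) (k : ℕ) (v : Fin n → ℝ)
    (hv : euclNorm v = 1) (c : ℝ)
    (h : ∀ p, IsPik k p → c ≤ euclNorm ((Polynomial.aeval A p).mulVec v)) : c ≤ Psi A k := by
  have h1 : IsPik k 1 := ⟨by simp, by simp⟩
  have hle : c ≤ gmresVal A k v := by
    refine le_csInf ⟨_, 1, h1, rfl⟩ ?_
    rintro _ ⟨p, hp, rfl⟩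
    exact h p hp
  refine hle.trans (le_csSup ⟨1, ?_⟩ ⟨v, hv, rfl⟩)
  rintro _ ⟨w, hw, rfl⟩
  refine csInf_le ⟨0, ?_⟩ ⟨1, h1, by simp [hw]⟩
  rintro _ ⟨p, hp, rfl⟩
  exact hp_nonneg _

/-- For a unit norm `k`-th worst-case GMRES initial vector `b` with worst-case
GMRES polynomial `p_k`, residual `r = p_k(A)b`, and `q_k` the `k`-th GMRES polynomial of `Aᵀ`
and `r/‖r‖`, one has `q_k(Aᵀ)p_k(A)b = Ψ_k(A)² b`. -/
theorem worst_case_eigenvector {n : ℕ} (A : Matrix (Fin n) (Fin n) ℝ)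
    (hA : IsUnit A) (k : ℕ) (hk1 : 1 ≤ k) (hk2 : k ≤ dA A - 1)
    (b : Fin n → ℝ) (hb : euclNorm b = 1)
    (pk : Polynomial ℝ) (hpk : IsGmresPoly A k b pk)
    (hwc : euclNorm ((Polynomial.aeval A pk).mulVec b) = Psi A k)
    (r : Fin n → ℝ) (hr : r = (Polynomial.aeval A pk).mulVec b)
    (qk : Polynomial ℝ) (hqk : IsGmresPoly Aᵀ k ((euclNorm r)⁻¹ • r) qk) :
    (Polynomial.aeval Aᵀ qk).mulVec ((Polynomial.aeval A pk).mulVec b)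
      = (Psi A k ^ 2) • b := by
  rw [← hr] at hwc ⊢
  have horth := hp_orth A k b pk qk hpk hqk.1
  rw [← hr, hwc] at horth
  have hΨ0 : 0 ≤ Psi A k := hwc ▸ hp_nonneg r
  rcases hΨ0.eq_or_lt with h0 | hpos
  · have hr0 : r ⬝ᵥ r = 0 := by rw [← hp_sq, hwc, ← h0]; simp
    rw [dotProduct_self_eq_zero.mp hr0, ← h0]
    simp
  have hru : r = Psi A k • ((euclNorm r)⁻¹ • r) := by
    rw [hwc, smul_smul, mul_inv_cancel₀ hpos.ne', one_smul]
  have hu : euclNorm ((euclNorm r)⁻¹ • r) = 1 := by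
    rw [hp_smul, hwc, abs_of_pos (inv_pos.mpr hpos), inv_mul_cancel₀ hpos.ne']
  generalize (euclNorm r)⁻¹ • r = u at *
  have horth2 := fun q hq => hp_orth Aᵀ k u qk q hqk hq
  obtain ⟨s, hs⟩ : ∃ s, s = (Polynomial.aeval Aᵀ qk).mulVec u := ⟨_, rfl⟩
  rw [← hs] at horth2
  -- inner product of `b` and `s`
  have hbs : b ⬝ᵥ s = Psi A k := by
    rw [hs, ← hp_adj]
    rw [hru, dotProduct_smul, smul_eq_mul] at horth
    apply mul_left_cancel₀ hpos.ne'
    rw [horth, sq]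
  have hge : Psi A k ≤ euclNorm s := by
    have := hp_cs b s
    rwa [hbs, hb, one_mul] at this
  have hspos : 0 < euclNorm s := hpos.trans_le hge
  have hle : euclNorm s ≤ Psi A k := by
    apply hp_le_Psi A k ((euclNorm s)⁻¹ • s)
    · rw [hp_smul, abs_of_pos (inv_pos.mpr hspos), inv_mul_cancel₀ hspos.ne']
    intro p hp
    have h1 := hp_cs ((Polynomial.aeval A p).mulVec ((euclNorm s)⁻¹ • s)) u
    rw [hu, mul_one, hp_adj, smul_dotProduct, dotProduct_comm, horth2 p hp, smul_eq_mul, sq,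
      inv_mul_cancel_left₀ hspos.ne'] at h1
    exact h1
  have heq : euclNorm s = Psi A k := le_antisymm hle hge
  have hsb : s = Psi A k • b := by
    rw [← sub_eq_zero, ← dotProduct_self_eq_zero]
    simp only [sub_dotProduct, dotProduct_sub, smul_dotProduct, dotProduct_smul, smul_eq_mul]
    rw [dotProduct_comm s b, hbs, ← hp_sq, ← hp_sq, heq, hb]
    ring
  rw [hru, Matrix.mulVec_smul, ← hs, hsb, smul_smul, sq]
end

section
/- Let A ∈ ℝ^{n×n} be nonsingular and 1 ≤ k < d(A). The function g(v) = min_{c ∈ ℝ^k} ‖v − K(v)c‖² is continuous on ℝ^n and infinitely differentiable on the open set Ω = {v ∈ ℝ^n : d(A, v) ≥ k}. Moreover, the set Γ = {v ∈ ℝ^n : d(A, v) < k} is closed and has Lebesgue measure zero in ℝ^n. -/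
open Polynomial Matrix

lemma dAb_lt_iff {n : ℕ} (A : Matrix (Fin n) (Fin n) ℝ) (k : ℕ) (v : Fin n → ℝ) :
    dAb A v < k ↔ ∃ q : Polynomial ℝ, q ≠ 0 ∧ q.natDegree < k ∧
      (Polynomial.aeval A q).mulVec v = 0 := by
  constructor
  · intro h
    have hne : {d : ℕ | ∃ q : Polynomial ℝ, q ≠ 0 ∧ q.natDegree = d ∧
        (Polynomial.aeval A q).mulVec v = 0}.Nonempty :=
      ⟨_, minpoly ℝ A, minpoly.ne_zero (Matrix.isIntegral A), rfl, by simp⟩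
    obtain ⟨q, h0, h1, h2⟩ := Nat.sInf_mem hne
    exact ⟨q, h0, by rw [h1]; exact h, h2⟩
  · rintro ⟨q, h0, h1, h2⟩
    exact lt_of_le_of_lt (Nat.sInf_le ⟨q, h0, rfl, h2⟩) h1

lemma gamma_eq {n : ℕ} (A : Matrix (Fin n) (Fin n) ℝ) (k : ℕ) :
    {v : Fin n → ℝ | dAb A v < k} = ⋃ a ∈ {a : Associates (Polynomial ℝ) |
      a ∣ Associates.mk (minpoly ℝ A) ∧ (Quot.out a).natDegree < k},
      ((LinearMap.ker (Matrix.mulVecLin (Polynomial.aeval A (Quot.out a))) :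
        Submodule ℝ (Fin n → ℝ)) : Set (Fin n → ℝ)) := by
  have hmin : minpoly ℝ A ≠ 0 := minpoly.ne_zero (Matrix.isIntegral A)
  ext v
  simp only [Set.mem_ofPred_eq, Set.mem_iUnion, SetLike.mem_coe, LinearMap.mem_ker,
    Matrix.mulVecLin_apply, exists_prop]
  rw [dAb_lt_iff]
  constructor
  · rintro ⟨q, h0, h1, h2⟩
    set g := EuclideanDomain.gcd q (minpoly ℝ A) with hg
    have hgq : g ∣ q := EuclideanDomain.gcd_dvd_left _ _
    have hgm : g ∣ minpoly ℝ A := EuclideanDomain.gcd_dvd_right _ _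
    have hgv : (Polynomial.aeval A g).mulVec v = 0 := by
      rw [hg, EuclideanDomain.gcd_eq_gcd_ab, mul_comm q, mul_comm (minpoly ℝ A)]
      simp [Matrix.add_mulVec, ← Matrix.mulVec_mulVec, h2]
    have hass : Associated (Quot.out (Associates.mk g)) g :=
      Associates.mk_eq_mk_iff_associated.mp (Quot.out_eq _)
    obtain ⟨t, ht⟩ := hass.dvd'
    refine ⟨Associates.mk g, ⟨Associates.mk_dvd_mk.2 hgm, ?_⟩, ?_⟩
    · exact lt_of_le_of_lt (Polynomial.natDegree_le_of_dvd (hass.dvd.trans hgq) h0) h1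
    · obtain ⟨t, ht⟩ := hass.symm.dvd
      rw [ht, mul_comm]
      simp [← Matrix.mulVec_mulVec, hgv]
  · rintro ⟨a, ⟨h0, h1⟩, h2⟩
    refine ⟨Quot.out a, ?_, h1, h2⟩
    intro hz
    have : a = Associates.mk 0 := by
      rw [← hz]; exact (Quot.out_eq a).symm
    rw [this, Associates.mk_dvd_mk] at h0
    exact hmin (zero_dvd_iff.mp h0)

lemma finite_divs {n : ℕ} (A : Matrix (Fin n) (Fin n) ℝ) (k : ℕ) :
    {a : Associates (Polynomial ℝ) |
      a ∣ Associates.mk (minpoly ℝ A) ∧ (Quot.out a).natDegree < k}.Finite := by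
  have hmin : minpoly ℝ A ≠ 0 := minpoly.ne_zero (Matrix.isIntegral A)
  have := UniqueFactorizationMonoid.fintypeSubtypeDvd (Associates.mk (minpoly ℝ A))
    (by simpa using hmin)
  exact (Set.finite_range (Subtype.val :
    {a : Associates (Polynomial ℝ) // a ∣ Associates.mk (minpoly ℝ A)} → _)).subset
    (fun a h => ⟨⟨a, h.1⟩, rfl⟩)

lemma gamma_closed {n : ℕ} (A : Matrix (Fin n) (Fin n) ℝ) (k : ℕ) :
    IsClosed {v : Fin n → ℝ | dAb A v < k} := by
  rw [gamma_eq]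
  exact (finite_divs A k).isClosed_biUnion fun a _ => Submodule.closed_of_finiteDimensional _

lemma gamma_null {n : ℕ} (A : Matrix (Fin n) (Fin n) ℝ) (k : ℕ) (hk2 : k < dA A) :
    MeasureTheory.volume {v : Fin n → ℝ | dAb A v < k} = 0 := by
  have hmin : minpoly ℝ A ≠ 0 := minpoly.ne_zero (Matrix.isIntegral A)
  rw [gamma_eq, MeasureTheory.measure_biUnion_null_iff (finite_divs A k).countable]
  rintro a ⟨h0, h1⟩
  apply MeasureTheory.Measure.addHaar_submodule
  intro htop
  have h2 : Polynomial.aeval A (Quot.out a) = 0 := by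
    have h3 := LinearMap.ker_eq_top.mp htop
    ext i j
    have := congrFun (LinearMap.congr_fun h3 (Pi.single j 1)) i
    simpa using this
  have hne : Quot.out a ≠ 0 := by
    intro hz
    have : a = Associates.mk 0 := by
      rw [← hz]; exact (Quot.out_eq a).symm
    rw [this, Associates.mk_dvd_mk] at h0
    exact hmin (zero_dvd_iff.mp h0)
  have := Polynomial.natDegree_le_of_dvd (minpoly.dvd ℝ A h2) hne
  unfold dA at hk2
  omega

lemma Kmat_mulVec {n : ℕ} (A : Matrix (Fin n) (Fin n) ℝ) (k : ℕ) (v : Fin n → ℝ)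
    (c : Fin k → ℝ) :
    Kmat A k v *ᵥ c = ∑ j : Fin k, c j • ((A ^ ((j : ℕ) + 1)) *ᵥ v) := by
  ext i
  simp [Kmat, Matrix.mulVec, dotProduct, Finset.sum_apply, mul_comm]

lemma unit_cancel {n : ℕ} {A : Matrix (Fin n) (Fin n) ℝ} (hA : IsUnit A) {w : Fin n → ℝ}
    (h : A *ᵥ w = 0) : w = 0 := by
  have := Matrix.mulVec_injective_iff_isUnit.mpr hA
  exact this (by simpa using h)

lemma Kmat_inj {n : ℕ} (A : Matrix (Fin n) (Fin n) ℝ) (hA : IsUnit A) (k : ℕ)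
    (v : Fin n → ℝ) (hv : k ≤ dAb A v) (c : Fin k → ℝ) (hc : Kmat A k v *ᵥ c = 0) : c = 0 := by
  by_contra hc0
  obtain ⟨j, hj⟩ := Function.ne_iff.mp hc0
  have hcoef : ∀ j : Fin k, (∑ i : Fin k, Polynomial.C (c i) * Polynomial.X ^ (i : ℕ)).coeff j
      = c j := by
    intro j
    simp [Polynomial.finsetSum_coeff, Polynomial.coeff_X_pow, Fin.val_inj]
  apply not_lt.mpr hv
  rw [dAb_lt_iff]
  refine ⟨∑ i : Fin k, Polynomial.C (c i) * Polynomial.X ^ (i : ℕ), ?_, ?_, ?_⟩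
  · intro h0
    have := hcoef j
    rw [h0] at this
    exact hj (by simpa using this.symm)
  · have hk : 0 < k := j.pos
    refine lt_of_le_of_lt (Polynomial.natDegree_sum_le_of_forall_le (n := k - 1) _ _ ?_) (by omega)
    intro i _
    refine (Polynomial.natDegree_C_mul_X_pow_le _ _).trans ?_
    have := i.2
    omega
  · apply unit_cancel hA
    rw [Kmat_mulVec] at hc
    rw [← hc, map_sum, Matrix.sum_mulVec, Matrix.mulVec_sum]
    refine Finset.sum_congr rfl fun i _ => ?_
    simp [pow_succ', ← Matrix.mulVec_mulVec, Algebra.algebraMap_eq_smul_one, Matrix.smul_mulVec,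
      Matrix.mulVec_smul]

lemma euclNorm_sq {ι : Type*} [Fintype ι] (v : ι → ℝ) : euclNorm v ^ 2 = v ⬝ᵥ v := by
  unfold euclNorm
  rw [Real.sq_sqrt (Finset.sum_nonneg fun i _ => sq_nonneg _)]
  simp [dotProduct, sq]

lemma gram_det {n : ℕ} (A : Matrix (Fin n) (Fin n) ℝ) (hA : IsUnit A) (k : ℕ)
    (v : Fin n → ℝ) (hv : k ≤ dAb A v) : ((Kmat A k v)ᵀ * Kmat A k v).det ≠ 0 := by
  intro h
  obtain ⟨c, hc, h0⟩ := Matrix.exists_mulVec_eq_zero_iff.mpr h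
  apply hc
  apply Kmat_inj A hA k v hv
  have := Matrix.conjTranspose_mul_self_mulVec_eq_zero (Kmat A k v) c
  rw [Matrix.conjTranspose_eq_transpose_of_trivial] at this
  exact this.mp h0

lemma gFun_le {n : ℕ} (A : Matrix (Fin n) (Fin n) ℝ) (k : ℕ) (v : Fin n → ℝ) (c : Fin k → ℝ) :
    gFun A k v ≤ euclNorm (v - Kmat A k v *ᵥ c) ^ 2 :=
  csInf_le ⟨0, by rintro _ ⟨c, rfl⟩; positivity⟩ ⟨c, rfl⟩

lemma gFun_nonneg {n : ℕ} (A : Matrix (Fin n) (Fin n) ℝ) (k : ℕ) (v : Fin n → ℝ) :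
    0 ≤ gFun A k v :=
  Real.sInf_nonneg (by rintro _ ⟨c, rfl⟩; positivity)

lemma gFun_eq {n : ℕ} (A : Matrix (Fin n) (Fin n) ℝ) (hA : IsUnit A) (k : ℕ)
    (v : Fin n → ℝ) (hv : k ≤ dAb A v) :
    gFun A k v = (v - Kmat A k v *ᵥ gammaVec A k v) ⬝ᵥ (v - Kmat A k v *ᵥ gammaVec A k v) := by
  apply le_antisymm
  · rw [← euclNorm_sq]; exact gFun_le A k v _
  · refine le_csInf (Set.nonempty_of_mem (x := euclNorm (v - Kmat A k v *ᵥ 0) ^ 2) ⟨0, rfl⟩) ?_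
    rintro _ ⟨c, rfl⟩
    rw [euclNorm_sq]
    set K := Kmat A k v with hK
    set r := v - K *ᵥ gammaVec A k v with hr
    have hdet : IsUnit (Kᵀ * K).det := (gram_det A hA k v hv).isUnit
    have h0 : Kᵀ *ᵥ r = 0 := by
      rw [hr, Matrix.mulVec_sub, Matrix.mulVec_mulVec, gammaVec, Matrix.mulVec_mulVec,
        Matrix.mul_nonsing_inv _ hdet, Matrix.one_mulVec, sub_self]
    have h1 : v - K *ᵥ c = r + K *ᵥ (gammaVec A k v - c) := by
      rw [hr, Matrix.mulVec_sub]; abel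
    have h2 : ∀ d, r ⬝ᵥ (K *ᵥ d) = 0 := by
      intro d
      rw [Matrix.dotProduct_mulVec, ← Matrix.mulVec_transpose, h0, zero_dotProduct]
    have h3 : 0 ≤ (K *ᵥ (gammaVec A k v - c)) ⬝ᵥ (K *ᵥ (gammaVec A k v - c)) := by
      rw [← euclNorm_sq]; positivity
    rw [h1, add_dotProduct, dotProduct_add, dotProduct_add, dotProduct_comm (K *ᵥ _) r, h2]
    linarith

lemma contDiff_det {E : Type*} [NormedAddCommGroup E] [NormedSpace ℝ E] {m : ℕ}
    (M : E → Matrix (Fin m) (Fin m) ℝ) (h : ∀ i j, ContDiff ℝ (⊤ : ℕ∞) fun v => M v i j) :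
    ContDiff ℝ (⊤ : ℕ∞) fun v => (M v).det := by
  simp only [Matrix.det_apply']
  exact ContDiff.sum fun σ _ => contDiff_const.mul (contDiff_prod fun i _ => h _ _)

lemma contDiff_adj {E : Type*} [NormedAddCommGroup E] [NormedSpace ℝ E] {m : ℕ}
    (M : E → Matrix (Fin m) (Fin m) ℝ) (h : ∀ i j, ContDiff ℝ (⊤ : ℕ∞) fun v => M v i j)
    (i j : Fin m) :
    ContDiff ℝ (⊤ : ℕ∞) fun v => (M v).adjugate i j := by
  simp only [Matrix.adjugate_apply]
  apply contDiff_det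
  intro a b
  by_cases hab : a = j
  · subst hab
    simp only [Matrix.updateRow_self]
    exact contDiff_const
  · simp only [Matrix.updateRow_ne hab]
    exact h a b

lemma contDiff_Kmat {n : ℕ} (A : Matrix (Fin n) (Fin n) ℝ) (k : ℕ) (i : Fin n) (j : Fin k) :
    ContDiff ℝ (⊤ : ℕ∞) fun v => Kmat A k v i j := by
  simp only [Kmat, Matrix.of_apply, Matrix.mulVec, dotProduct]
  fun_prop

lemma gFun_smooth {n : ℕ} (A : Matrix (Fin n) (Fin n) ℝ) (hA : IsUnit A) (k : ℕ) :
    ContDiffOn ℝ (⊤ : ℕ∞) (gFun A k) {v : Fin n → ℝ | k ≤ dAb A v} := by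
  refine ContDiffOn.congr ?_ (fun v hv => gFun_eq A hA k v hv)
  have hK := fun i j => (contDiff_Kmat A k i j).contDiffOn (s := {v : Fin n → ℝ | k ≤ dAb A v})
  have hM : ∀ i j, ContDiff ℝ (⊤ : ℕ∞) fun v => ((Kmat A k v)ᵀ * Kmat A k v) i j := by
    intro i j
    simp only [Matrix.mul_apply, Matrix.transpose_apply]
    exact ContDiff.sum fun l _ => (contDiff_Kmat A k _ _).mul (contDiff_Kmat A k _ _)
  have hinv : ∀ i j, ContDiffOn ℝ (⊤ : ℕ∞) (fun v => (((Kmat A k v)ᵀ * Kmat A k v)⁻¹) i j)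
      {v : Fin n → ℝ | k ≤ dAb A v} := by
    intro i j
    simp only [Matrix.inv_def, Matrix.smul_apply, Ring.inverse_eq_inv', smul_eq_mul]
    exact ((contDiff_det _ hM).contDiffOn.inv (fun v hv => gram_det A hA k v hv)).mul
      (contDiff_adj _ hM i j).contDiffOn
  have hv : ∀ i, ContDiffOn ℝ (⊤ : ℕ∞) (fun v : Fin n → ℝ => v i)
      {v : Fin n → ℝ | k ≤ dAb A v} := fun i => by fun_prop
  have hg : ∀ i, ContDiffOn ℝ (⊤ : ℕ∞) (fun v => gammaVec A k v i)
      {v : Fin n → ℝ | k ≤ dAb A v} := by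
    intro i
    simp only [gammaVec, Matrix.mulVec, dotProduct, Matrix.transpose_apply]
    exact ContDiffOn.sum fun l _ => (hinv _ _).mul
      (ContDiffOn.sum fun l _ => (hK _ _).mul (hv _))
  have hr : ∀ i, ContDiffOn ℝ (⊤ : ℕ∞) (fun v => (v - Kmat A k v *ᵥ gammaVec A k v) i)
      {v : Fin n → ℝ | k ≤ dAb A v} := by
    intro i
    simp only [Pi.sub_apply, Matrix.mulVec, dotProduct]
    exact (hv i).sub (ContDiffOn.sum fun l _ => (hK _ _).mul (hg _))
  simp only [dotProduct]
  exact ContDiffOn.sum fun l _ => (hr l).mul (hr l)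

lemma exists_zero_res {n : ℕ} (A : Matrix (Fin n) (Fin n) ℝ) (hA : IsUnit A) (k : ℕ)
    (v : Fin n → ℝ) (hv : dAb A v < k) : ∃ c, v - Kmat A k v *ᵥ c = 0 := by
  rw [dAb_lt_iff] at hv
  obtain ⟨q, h0, h1, h2⟩ := hv
  obtain ⟨r, hr, hnd⟩ := Polynomial.exists_eq_pow_rootMultiplicity_mul_and_not_dvd q h0 0
  simp only [map_zero, sub_zero] at hr hnd
  rw [Polynomial.X_dvd_iff] at hnd
  have hrdeg : r.natDegree < k :=
    lt_of_le_of_lt (Polynomial.natDegree_le_of_dvd (Dvd.intro_left _ hr.symm) h0) h1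
  have hrv : (Polynomial.aeval A r).mulVec v = 0 := by
    apply unit_cancel (hA.pow (Polynomial.rootMultiplicity 0 q))
    rw [hr] at h2
    simpa [← Matrix.mulVec_mulVec] using h2
  rw [Polynomial.aeval_eq_sum_range' (n := k + 1) (by omega), Matrix.sum_mulVec,
    Finset.sum_range_succ'] at hrv
  refine ⟨fun j => - (r.coeff 0)⁻¹ * r.coeff (j + 1), ?_⟩
  rw [Kmat_mulVec]
  have : (r.coeff 0) • (v - ∑ j : Fin k, (- (r.coeff 0)⁻¹ * r.coeff (j + 1)) •
      ((A ^ ((j : ℕ) + 1)) *ᵥ v)) = 0 := by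
    rw [← hrv, smul_sub, Finset.smul_sum, ← Fin.sum_univ_eq_sum_range
      (fun j => (r.coeff (j + 1) • A ^ (j + 1)) *ᵥ v)]
    simp [smul_smul, hnd, Matrix.smul_mulVec, ← mul_assoc, add_comm]
  exact (smul_eq_zero.mp this).resolve_left hnd

lemma gFun_cont {n : ℕ} (A : Matrix (Fin n) (Fin n) ℝ) (hA : IsUnit A) (k : ℕ)
    (hop : IsOpen {v : Fin n → ℝ | k ≤ dAb A v}) : Continuous (gFun A k) := by
  rw [continuous_iff_continuousAt]
  intro v
  by_cases hv : k ≤ dAb A v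
  · exact (gFun_smooth A hA k).continuousOn.continuousAt (hop.mem_nhds hv)
  · obtain ⟨c, hc⟩ := exists_zero_res A hA k v (not_le.mp hv)
    have hg0 : gFun A k v = 0 := by
      apply le_antisymm _ (gFun_nonneg A k v)
      have := gFun_le A k v c
      rw [hc, euclNorm_sq] at this
      simpa using this
    have hcont : Continuous fun w => euclNorm (w - Kmat A k w *ᵥ c) ^ 2 := by
      simp only [euclNorm_sq, Kmat_mulVec, dotProduct, Matrix.mulVec, Pi.sub_apply,
        Finset.sum_apply, Pi.smul_apply]
      fun_prop
    have ht := hcont.tendsto v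
    rw [hc, euclNorm_sq, dotProduct_zero] at ht
    unfold ContinuousAt
    rw [hg0]
    exact squeeze_zero (gFun_nonneg A k) (fun w => gFun_le A k w c) ht

/-- `g(v) = min_c ‖v - K(v)c‖²` is continuous on `ℝ^n` and infinitely
differentiable on the open set `Ω = {v : d(A,v) ≥ k}`; moreover `Γ = {v : d(A,v) < k}` is
closed and has Lebesgue measure zero. -/
theorem gmres_value_regularity {n : ℕ} (A : Matrix (Fin n) (Fin n) ℝ)
    (hA : IsUnit A) (k : ℕ) (hk1 : 1 ≤ k) (hk2 : k < dA A) :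
    Continuous (gFun A k) ∧
    IsOpen {v : Fin n → ℝ | k ≤ dAb A v} ∧
    ContDiffOn ℝ (⊤ : ℕ∞) (gFun A k) {v : Fin n → ℝ | k ≤ dAb A v} ∧
    IsClosed {v : Fin n → ℝ | dAb A v < k} ∧
    MeasureTheory.volume {v : Fin n → ℝ | dAb A v < k} = 0 := by
  have hcl := gamma_closed A k
  have hop : IsOpen {v : Fin n → ℝ | k ≤ dAb A v} := by
    have h := hcl.isOpen_compl
    have he : {v : Fin n → ℝ | dAb A v < k}ᶜ = {v : Fin n → ℝ | k ≤ dAb A v} := by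
      ext v
      simp
    rwa [he] at h
  exact ⟨gFun_cont A hA k hop, hop, gFun_smooth A hA k, hcl, gamma_null A k hk2⟩
end
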